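/- arXiv:2112.06762 — 3 statements merged into one kernel-verified Lean document; each statement's English description precedes it below -/
import Mathlib

section
/- No irrational number is implicitly definable in the standard MV-algebra: if f : [0,1]^n → [0,1] is a McNaughton function, the set { x̄ : f(x̄) = 1 } is nonempty, and there is a real a ∈ [0,1] such that every x̄ with f(x̄) = 1 satisfies x_i = a, then a is rational. -/
/-- The unit cube `[0,1]^n`. -/
def Box (n : ℕ) : Set (Fin n → ℝ) := {x | ∀ i, x i ∈ Set.Icc (0 : ℝ) 1}

/-- An `n`-variable McNaughton function: a continuous function from `[0,1]^n` to `[0,1]`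
such that there are finitely many affine polynomials with integer coefficients,
one of which agrees with `f` at each point of the cube. -/
def IsMcNaughton {n : ℕ} (f : (Fin n → ℝ) → ℝ) : Prop :=
  ContinuousOn f (Box n) ∧ (∀ x ∈ Box n, f x ∈ Set.Icc (0 : ℝ) 1) ∧
  ∃ P : Finset ((Fin n → ℤ) × ℤ), ∀ x ∈ Box n,
    ∃ c ∈ P, f x = (∑ j, (c.1 j : ℝ) * x j) + (c.2 : ℝ)

/-- no irrational number is implicitly definable in the standard
MV-algebra: if `f` is a McNaughton function, `{ x̄ : f(x̄) = 1 }` is nonempty, and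
`a ∈ [0,1]` is such that every `x̄` with `f(x̄) = 1` satisfies `x_i = a`, then `a` is
rational. -/
theorem implicitly_definable_implies_rational {n : ℕ} (f : (Fin n → ℝ) → ℝ)
    (hf : IsMcNaughton f) (hne : ∃ x ∈ Box n, f x = 1) (i : Fin n)
    (a : ℝ) (ha : a ∈ Set.Icc (0 : ℝ) 1)
    (hdef : ∀ x ∈ Box n, f x = 1 → x i = a) :
    ∃ r : ℚ, a = (r : ℝ) := by
  by_contra hcon
  obtain ⟨hcont, -, P, hP⟩ := hf
  obtain ⟨x, hx, hfx⟩ := hne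
  have hxa := hdef x hx hfx
  -- a `ℚ`-linear functional vanishing on `1` but not on `a`
  have hd : ∃ d : ℝ →ₗ[ℚ] ℚ, d 1 = 0 ∧ d a ≠ 0 := by
    have hmem : a ∉ Submodule.span ℚ ({1} : Set ℝ) := by
      intro h
      obtain ⟨r, hr⟩ := Submodule.mem_span_singleton.1 h
      exact hcon ⟨r, by rw [← hr, Rat.smul_def, mul_one]⟩
    obtain ⟨d, hda, hd⟩ := Submodule.exists_dual_map_eq_bot_of_notMem hmem inferInstance
    refine ⟨d, ?_, hda⟩
    have : d 1 ∈ (Submodule.span ℚ ({1} : Set ℝ)).map d :=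
      Submodule.mem_map_of_mem (Submodule.mem_span_singleton_self 1)
    rw [hd] at this
    simpa using this
  obtain ⟨d, hd1, hda⟩ := hd
  have hdint : ∀ m : ℤ, d (m : ℝ) = 0 := by
    intro m
    have : (m : ℝ) = (m : ℤ) • (1 : ℝ) := by simp
    rw [this, map_zsmul, hd1, smul_zero]
  have hdmul : ∀ (m : ℤ) (y : ℝ), d ((m : ℝ) * y) = (m : ℚ) * d y := by
    intro m y
    rw [← zsmul_eq_mul, map_zsmul, zsmul_eq_mul]
  let y : ℝ → Fin n → ℝ := fun t j => x j + t * (d (x j) : ℝ)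
  let p : (Fin n → ℤ) × ℤ → (Fin n → ℝ) → ℝ := fun c z => (∑ j, (c.1 j : ℝ) * z j) + (c.2 : ℝ)
  have hy0 : y 0 = x := by funext j; simp [y]
  have hyc : Continuous y := by fun_prop
  have hy : Filter.Tendsto y (nhdsWithin 0 {0}ᶜ) (nhds x) := by
    have := hyc.tendsto 0
    rw [hy0] at this
    exact this.mono_left nhdsWithin_le_nhds
  have hbox : ∀ᶠ t in nhdsWithin (0 : ℝ) {0}ᶜ, y t ∈ Box n := by
    have : ∀ j, ∀ᶠ t in nhdsWithin (0 : ℝ) {0}ᶜ, y t j ∈ Set.Icc (0 : ℝ) 1 := by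
      intro j
      have hj := hx j
      rcases eq_or_ne (x j) 0 with h0 | h0
      · refine Filter.Eventually.of_forall fun t => ?_
        simp [y, h0]
      rcases eq_or_ne (x j) 1 with h1 | h1
      · refine Filter.Eventually.of_forall fun t => ?_
        simp [y, h1, hd1]
      · have hlt : x j ∈ Set.Ioo (0 : ℝ) 1 := ⟨lt_of_le_of_ne hj.1 h0.symm, lt_of_le_of_ne hj.2 h1⟩
        have := (tendsto_pi_nhds.1 hy j).eventually (isOpen_Ioo.mem_nhds hlt)
        exact this.mono fun t ht => Set.Ioo_subset_Icc_self ht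
    exact Filter.eventually_all.2 this
  have hft : Filter.Tendsto (fun t => f (y t)) (nhdsWithin 0 {0}ᶜ) (nhds 1) := by
    have h := hcont x hx
    rw [ContinuousWithinAt, hfx] at h
    exact h.comp (tendsto_nhdsWithin_iff.2 ⟨hy, hbox⟩)
  have hev : ∀ᶠ t in nhdsWithin (0 : ℝ) {0}ᶜ, ∀ c ∈ P, f (y t) = p c (y t) → p c x = 1 := by
    rw [Filter.eventually_all_finset]
    intro c _
    by_cases hc : p c x = 1
    · exact Filter.Eventually.of_forall fun _ _ => hc
    · have hpc : Continuous (p c) := by fun_prop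
      have h1 : Filter.Tendsto (fun t => f (y t) - p c (y t)) (nhdsWithin 0 {0}ᶜ)
          (nhds (1 - p c x)) := hft.sub ((hpc.tendsto x).comp hy)
      have h2 := h1.eventually_ne (sub_ne_zero.2 (Ne.symm hc))
      exact h2.mono fun t ht h => absurd (sub_eq_zero.2 h) ht
  obtain ⟨t, ⟨htb, hte⟩, ht0⟩ := ((hbox.and hev).and self_mem_nhdsWithin).exists
  obtain ⟨c, hcP, hc⟩ := hP (y t) htb
  have hpx : p c x = 1 := hte c hcP hc
  have hsum : ∑ j, (c.1 j : ℚ) * d (x j) = 0 := by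
    have h := congrArg d hpx
    simpa [p, map_add, map_sum, hdmul, hdint, hd1] using h
  have hsumR : ∑ j, (c.1 j : ℝ) * (d (x j) : ℝ) = 0 := by exact_mod_cast hsum
  have hfy : f (y t) = 1 := by
    rw [hc, ← hpx]
    have : ∑ j, (c.1 j : ℝ) * y t j
        = ∑ j, (c.1 j : ℝ) * x j + t * ∑ j, (c.1 j : ℝ) * (d (x j) : ℝ) := by
      rw [Finset.mul_sum, ← Finset.sum_add_distrib]
      exact Finset.sum_congr rfl fun j _ => by simp only [y]; ring
    rw [this, hsumR, mul_zero, add_zero]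
  have hya := hdef (y t) htb hfy
  have hz : t * (d a : ℝ) = 0 := by
    simp only [y, hxa] at hya
    linarith
  rcases mul_eq_zero.1 hz with h | h
  · exact ht0 h
  · exact hda (by exact_mod_cast h)
end

section
/- The only expansion of the standard MV-algebra with rational constants satisfying the bookkeeping axioms is the canonical one: if c : ℚ∩[0,1] → [0,1] is a function satisfying c(1) = 1, c(0) = 0, c(1−q) = 1 − c(q), and c(min(1, 1−q+r)) = min(1, 1 − c(q) + c(r)) for all rationals q, r ∈ [0,1], then c(q) = q for every rational q ∈ [0,1]. -/
/-- the only expansion of the standard MV-algebra with rational constants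
satisfying the bookkeeping axioms is the canonical one: if `c : ℚ∩[0,1] → [0,1]`
satisfies `c(1) = 1`, `c(0) = 0`, `c(1−q) = 1−c(q)` and
`c(min(1, 1−q+r)) = min(1, 1−c(q)+c(r))` for all rationals `q, r ∈ [0,1]`, then
`c(q) = q` for every rational `q ∈ [0,1]`. -/
theorem bookkeeping_expansion_is_canonical (c : ℚ → ℝ)
    (hrange : ∀ q : ℚ, 0 ≤ q → q ≤ 1 → c q ∈ Set.Icc (0 : ℝ) 1)
    (h1 : c 1 = 1) (h0 : c 0 = 0)
    (hneg : ∀ q : ℚ, 0 ≤ q → q ≤ 1 → c (1 - q) = 1 - c q)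
    (himp : ∀ q r : ℚ, 0 ≤ q → q ≤ 1 → 0 ≤ r → r ≤ 1 →
      c (min 1 (1 - q + r)) = min 1 (1 - c q + c r)) :
    ∀ q : ℚ, 0 ≤ q → q ≤ 1 → c q = (q : ℝ) := by
  have hmono : ∀ q r : ℚ, 0 ≤ r → r ≤ q → q ≤ 1 → c r ≤ c q := by
    intro q r hr hrq hq
    have h := himp r q hr (hrq.trans hq) (hr.trans hrq) hq
    rw [min_eq_left (by linarith), h1] at h
    have := min_le_right 1 (1 - c r + c q)
    linarith
  have hadd : ∀ a b : ℚ, 0 ≤ a → 0 ≤ b → a + b ≤ 1 → c (a + b) = c a + c b := by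
    intro a b ha hb hab
    have h := himp (a + b) b (by linarith) hab hb (by linarith)
    have hm := hmono (a + b) b hb (by linarith) hab
    rw [min_eq_right (by linarith), min_eq_right (by linarith),
      show 1 - (a + b) + b = 1 - a by ring, hneg a ha (by linarith)] at h
    linarith
  have hmul : ∀ (x : ℚ), 0 ≤ x → ∀ k : ℕ, (k : ℚ) * x ≤ 1 → c (k * x) = k * c x := by
    intro x hx k
    induction k with
    | zero => intro _; simp [h0]
    | succ k ih =>
      intro hk
      push_cast at hk ⊢
      have hk' : (k : ℚ) * x + x ≤ 1 := by linarith
      rw [show ((k : ℚ) + 1) * x = k * x + x by ring,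
        hadd _ _ (by positivity) hx hk', ih (by linarith)]
      ring
  intro q hq hq1
  have hd : (0 : ℚ) < q.den := by exact_mod_cast q.den_pos
  have hdR : (0 : ℝ) < q.den := by exact_mod_cast q.den_pos
  obtain ⟨n, hn⟩ := Int.eq_ofNat_of_zero_le (Rat.num_nonneg.mpr hq)
  have hqe : q = (n : ℚ) * (1 / q.den) := by
    have h := Rat.num_div_den q
    rw [hn] at h
    rw [mul_one_div]
    simpa using h.symm
  have hden : c (1 / (q.den : ℚ)) = 1 / (q.den : ℝ) := by
    have e : (q.den : ℚ) * (1 / q.den) = 1 := by field_simp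
    have h := hmul (1 / q.den) (by positivity) q.den e.le
    rw [e, h1] at h
    field_simp
    linarith
  have h := hmul (1 / q.den) (by positivity) n (by rw [← hqe]; exact hq1)
  rw [← hqe, hden] at h
  rw [h]
  have := congrArg (fun x : ℚ => (x : ℝ)) hqe
  push_cast at this
  exact this.symm
end

section
/- The standard MV-algebra has no nontrivial automorphisms: if h : [0,1] → [0,1] is a bijection of the real unit interval satisfying h(1−x) = 1 − h(x) and h(min(1, x+y)) = min(1, h(x) + h(y)) for all x, y ∈ [0,1], then h is the identity map. -/
/-- the standard MV-algebra has no nontrivial automorphisms: if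
`h : [0,1] → [0,1]` is a bijection of the real unit interval satisfying
`h(1−x) = 1−h(x)` and `h(min(1, x+y)) = min(1, h(x)+h(y))` for all `x, y ∈ [0,1]`,
then `h` is the identity map. -/
theorem standard_mv_algebra_rigid (h : ℝ → ℝ)
    (hbij : Set.BijOn h (Set.Icc (0 : ℝ) 1) (Set.Icc (0 : ℝ) 1))
    (hneg : ∀ x ∈ Set.Icc (0 : ℝ) 1, h (1 - x) = 1 - h x)
    (hplus : ∀ x ∈ Set.Icc (0 : ℝ) 1, ∀ y ∈ Set.Icc (0 : ℝ) 1,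
      h (min 1 (x + y)) = min 1 (h x + h y)) :
    ∀ x ∈ Set.Icc (0 : ℝ) 1, h x = x := by
  have hI : ∀ x ∈ Set.Icc (0 : ℝ) 1, 0 ≤ h x ∧ h x ≤ 1 := fun x hx => hbij.mapsTo hx
  have hmono : ∀ x y : ℝ, 0 ≤ x → x ≤ y → y ≤ 1 → h x ≤ h y := by
    intro x y hx hxy hy
    have hxI : x ∈ Set.Icc (0 : ℝ) 1 := ⟨hx, by linarith⟩
    have hyx : y - x ∈ Set.Icc (0 : ℝ) 1 := ⟨by linarith, by linarith⟩
    have e := hplus x hxI (y - x) hyx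
    rw [add_sub_cancel, min_eq_right hy] at e
    rw [e]
    exact le_min (hI x hxI).2 (by linarith [(hI _ hyx).1])
  have hadd : ∀ x : ℝ, 0 ≤ x → x + x ≤ 1 → h (x + x) = h x + h x := by
    intro x hx hxx
    have hxI : x ∈ Set.Icc (0 : ℝ) 1 := ⟨hx, by linarith⟩
    have e := hplus x hxI x hxI
    have m := hmono x (1 - x) hx (by linarith) (by linarith)
    rw [hneg x hxI] at m
    rwa [min_eq_right hxx, min_eq_right (by linarith)] at e
  have key : ∀ n : ℕ, ∀ x ∈ Set.Icc (0 : ℝ) 1, 2 ^ n * |h x - x| ≤ 1 := by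
    intro n
    induction n with
    | zero =>
      intro x hx
      have := hI x hx
      rw [pow_zero, one_mul, abs_le]
      constructor <;> linarith [hx.1, hx.2]
    | succ k ih =>
      have half : ∀ x : ℝ, 0 ≤ x → x + x ≤ 1 → 2 ^ (k + 1) * |h x - x| ≤ 1 := by
        intro x hx hxx
        have e := ih (x + x) ⟨by linarith, hxx⟩
        rw [hadd x hx hxx, show h x + h x - (x + x) = 2 * (h x - x) by ring, abs_mul,
          abs_two] at e
        rw [pow_succ]
        linarith
      intro x hx
      rcases le_total (x + x) 1 with hxx | hxx
      · exact half x hx.1 hxx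
      · have e := half (1 - x) (by linarith [hx.2]) (by linarith)
        rwa [hneg x hx, show 1 - h x - (1 - x) = -(h x - x) by ring, abs_neg] at e
  intro x hx
  by_contra hne
  have hpos : 0 < |h x - x| := abs_pos.mpr (sub_ne_zero.mpr hne)
  obtain ⟨n, hn⟩ := pow_unbounded_of_one_lt (1 / |h x - x|) (one_lt_two : (1 : ℝ) < 2)
  rw [div_lt_iff₀ hpos] at hn
  linarith [key n x hx]
end
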